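/- arXiv:1811.00042 — 3 statements merged into one kernel-verified Lean document; each statement's English description precedes it below -/
import Mathlib

section
/- Let (A, m) be an Artinian local ring with residue field k = A/m, and Ω a finite A-module with Hom_A(k, Ω) ≅ k and length_A(Ω) ≥ length_A(A). Then Ω is isomorphic to the injective hull E(k) of k, and in particular length_A(Ω) = length_A(A). -/
open CategoryTheory IsLocalRing

/-- The length of a module, as the Krull dimension of its lattice of submodules. -/
noncomputable def mlen (R M : Type) [Ring R] [AddCommGroup M] [Module R M] : WithBot ℕ∞ :=
  Order.krullDim (Submodule R M)

/-- `extM R M N n` is `Ext^n_R(M, N)`. -/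
noncomputable def extM (R : Type) [CommRing R] (M N : Type)
    [AddCommGroup M] [Module R M] [AddCommGroup N] [Module R N] (n : ℕ) : ModuleCat R :=
  ((Ext R (ModuleCat R) n).obj (Opposite.op (ModuleCat.of R M))).obj (ModuleCat.of R N)

/-- The length of the localization `M_P` over `R_P`. -/
noncomputable def locLen (R : Type) [CommRing R] (M : Type) [AddCommGroup M] [Module R M]
    (P : PrimeSpectrum R) : WithBot ℕ∞ :=
  mlen (Localization.AtPrime P.asIdeal) (LocalizedModule P.asIdeal.primeCompl M)

/-- `E` is an injective hull of the residue field of `A`: it is injective and an essential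
extension of the residue field. -/
def IsInjHullResidue (A : Type) [CommRing A] [IsLocalRing A]
    (E : Type) [AddCommGroup E] [Module A E] : Prop :=
  Module.Injective A E ∧
    ∃ f : ResidueField A →ₗ[A] E, Function.Injective f ∧
      ∀ N : Submodule A E, N ≠ ⊥ → N ⊓ LinearMap.range f ≠ ⊥

/-!
Write `k` for the residue field. Since every simple `A`-module is isomorphic to `k`, left exactness
of `Hom_A(-, M)` and induction on the length of `N` give
`length Hom_A(N, M) ≤ length N * length Hom_A(k, M)`; taking `N = A` bounds the length of any module
with `Hom_A(k, M)` simple by that of `A`. This applies both to `Ω` and to an injective hull `E` of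
`k`, where `Hom_A(k, E)` is simple by essentiality. Extend `k → E` along `k → Ω` to a map `Ω → E`:
it is injective on the socle, hence injective, and it is surjective because
`length E ≤ length A ≤ length Ω`.
-/

lemma mlen_eq_coe_length (R M : Type) [Ring R] [AddCommGroup M] [Module R M] :
    mlen R M = Module.length R M :=
  (Module.coe_length R M).symm

section Modules

variable {R M N P : Type*} [Ring R] [AddCommGroup M] [AddCommGroup N] [AddCommGroup P]
  [Module R M] [Module R N] [Module R P]

lemma length_le_add_of_exact {f : M →ₗ[R] N} {g : N →ₗ[R] P} (hfg : Function.Exact f g) :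
    Module.length R N ≤ Module.length R M + Module.length R P := by
  have hker : Module.length R g.ker ≤ Module.length R M := by
    rw [LinearMap.exact_iff.mp hfg]
    exact Module.length_le_of_surjective f.rangeRestrict f.surjective_rangeRestrict
  have hrange : Module.length R g.range ≤ Module.length R P :=
    Module.length_le_of_injective g.range.subtype g.range.subtype_injective
  rw [Module.length_eq_add_of_exact g.ker.subtype g.rangeRestrict g.ker.subtype_injective
    g.surjective_rangeRestrict (LinearMap.exact_iff.mpr (by simp))]
  exact add_le_add hker hrange

lemma bijective_of_injective_of_length_le {f : M →ₗ[R] N} (hN : IsFiniteLength R N)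
    (hf : Function.Injective f) (hle : Module.length R N ≤ Module.length R M) :
    Function.Bijective f := by
  obtain ⟨_, _⟩ := isFiniteLength_iff_isNoetherian_isArtinian.mp hN
  refine ⟨hf, LinearMap.range_eq_top.mp (by_contra fun hne ↦ ?_)⟩
  exact (Submodule.length_lt hne).not_ge (hle.trans_eq (LinearEquiv.ofInjective f hf).length_eq)

lemma range_le_of_essential [IsSimpleModule R M] {K : Submodule R N}
    (hK : ∀ L : Submodule R N, L ≠ ⊥ → L ⊓ K ≠ ⊥) (φ : M →ₗ[R] N) : φ.range ≤ K := by
  obtain hbot | htop := eq_bot_or_eq_top (K.comap φ)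
  · have hinf : φ.range ⊓ K = ⊥ := by rw [← Submodule.map_comap_eq, hbot, Submodule.map_bot]
    exact (not_imp_not.mp (hK φ.range) hinf).le.trans bot_le
  · exact LinearMap.range_le_iff_comap.mpr htop

end Modules

section LocalRing

variable {A M N : Type*} [CommRing A] [IsLocalRing A] [AddCommGroup M] [AddCommGroup N]
  [Module A M] [Module A N]

lemma nonempty_linearEquiv_residueField [IsSimpleModule A M] :
    Nonempty (M ≃ₗ[A] ResidueField A) := by
  obtain ⟨I, hI, he⟩ := isSimpleModule_iff_quot_maximal.mp ‹IsSimpleModule A M›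
  rwa [eq_maximalIdeal hI] at he

instance isSimpleModule_residueField : IsSimpleModule A (ResidueField A) :=
  isSimpleModule_iff_isCoatom.mpr (maximalIdeal.isMaximal A).out

instance isSimpleModule_residueField_end : IsSimpleModule A (ResidueField A →ₗ[A] ResidueField A) :=
  .congr <| (LinearMap.extendScalarsOfSurjectiveEquiv residue_surjective).trans
    (LinearMap.ringLmapEquivSelf (ResidueField A) A (ResidueField A))

lemma isSimpleModule_residueField_hom_of_essential {f : ResidueField A →ₗ[A] M}
    (hf : Function.Injective f) (hess : ∀ N : Submodule A M, N ≠ ⊥ → N ⊓ f.range ≠ ⊥) :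
    IsSimpleModule A (ResidueField A →ₗ[A] M) := by
  have surjective_postcomp (φ : ResidueField A →ₗ[A] M) :
      ∃ ψ : ResidueField A →ₗ[A] ResidueField A, f ∘ₗ ψ = φ := by
    have hφ (x : ResidueField A) : φ x ∈ f.range := range_le_of_essential hess φ ⟨x, rfl⟩
    refine ⟨(LinearEquiv.ofInjective f hf).symm ∘ₗ φ.codRestrict f.range hφ, ?_⟩
    exact LinearMap.ext fun x ↦
      congrArg Subtype.val ((LinearEquiv.ofInjective f hf).apply_symm_apply ⟨φ x, hφ x⟩)
  exact .congr <| LinearEquiv.symm <| .ofBijective (LinearMap.llcomp A _ _ _ f)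
    ⟨fun _ _ h ↦ (LinearMap.cancel_left hf).mp h, surjective_postcomp⟩

theorem length_linearMap_le (hN : IsFiniteLength A N) :
    Module.length A (N →ₗ[A] M) ≤
      Module.length A N * Module.length A (ResidueField A →ₗ[A] M) := by
  induction hN with
  | of_subsingleton => simp
  | @of_simple_quotient N _ _ S _ _ ih =>
    obtain ⟨e⟩ := nonempty_linearEquiv_residueField (A := A) (M := N ⧸ S)
    have hexact : Function.Exact (LinearMap.lcomp A M S.mkQ) (LinearMap.lcomp A M S.subtype) :=
      LinearMap.exact_lcomp_of_exact_of_surjective M (LinearMap.exact_subtype_mkQ S)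
        S.mkQ_surjective
    have hlength : Module.length A N = Module.length A S + 1 := by
      rw [Module.length_eq_add_of_exact S.subtype S.mkQ S.subtype_injective S.mkQ_surjective
        (LinearMap.exact_subtype_mkQ S), Module.length_eq_one (R := A) (M := N ⧸ S)]
    calc Module.length A (N →ₗ[A] M)
        ≤ Module.length A ((N ⧸ S) →ₗ[A] M) + Module.length A (S →ₗ[A] M) :=
          length_le_add_of_exact hexact
      _ ≤ Module.length A (ResidueField A →ₗ[A] M) +
            Module.length A S * Module.length A (ResidueField A →ₗ[A] M) :=
          add_le_add (e.congrLeft M A).length_eq.le ih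
      _ = Module.length A N * Module.length A (ResidueField A →ₗ[A] M) := by
          rw [hlength, add_mul, one_mul, add_comm]

lemma injective_of_forall_residueField_hom [IsAtomic (Submodule A M)] {h : M →ₗ[A] N}
    (hh : ∀ φ : ResidueField A →ₗ[A] M, h ∘ₗ φ = 0 → φ = 0) : Function.Injective h := by
  rw [← LinearMap.ker_eq_bot]
  by_contra hker
  obtain ⟨S, hS, hSker⟩ := (eq_bot_or_exists_atom_le h.ker).resolve_left hker
  have := isSimpleModule_iff_isAtom.mpr hS
  obtain ⟨e⟩ := nonempty_linearEquiv_residueField (A := A) (M := S)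
  have hzero : S.subtype ∘ₗ e.symm.toLinearMap = 0 :=
    hh _ (LinearMap.ext fun x ↦ hSker (e.symm x).2)
  refine hS.1 ((Submodule.eq_bot_iff S).mpr fun x hx ↦ ?_)
  simpa using LinearMap.congr_fun hzero (e ⟨x, hx⟩)

-- `Module.Baer` rather than `Module.Injective`, which only extends maps between modules in the
-- universe of `N`.
lemma exists_injective_linearMap_of_baer [IsAtomic (Submodule A M)]
    [IsSimpleModule A (ResidueField A →ₗ[A] M)] (hN : Module.Baer A N)
    [Nontrivial (ResidueField A →ₗ[A] N)] :
    ∃ h : M →ₗ[A] N, Function.Injective h := by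
  have := IsSimpleModule.nontrivial A (ResidueField A →ₗ[A] M)
  obtain ⟨g, hg⟩ := exists_ne (0 : ResidueField A →ₗ[A] M)
  obtain ⟨f, hf⟩ := exists_ne (0 : ResidueField A →ₗ[A] N)
  obtain ⟨h, hhg⟩ := hN.extension_property g (LinearMap.injective_of_ne_zero hg) f
  refine ⟨h, injective_of_forall_residueField_hom fun φ hφ ↦ by_contra fun hφ0 ↦ hf ?_⟩
  obtain ⟨a, rfl⟩ := IsSimpleModule.toSpanSingleton_surjective A hφ0 g
  rw [← hhg, LinearMap.toSpanSingleton_apply, LinearMap.comp_smul, hφ, smul_zero]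

end LocalRing

section ArtinianLocalRing

variable {A M : Type*} [CommRing A] [IsArtinianRing A] [IsLocalRing A] [AddCommGroup M]
  [Module A M]

theorem length_le_length_ring_mul_length_hom :
    Module.length A M ≤ Module.length A A * Module.length A (ResidueField A →ₗ[A] M) := by
  rw [← (LinearMap.ringLmapEquivSelf A A M).length_eq]
  exact length_linearMap_le (Module.length_ne_top_iff.mp Module.length_ne_top)

lemma length_le_length_ring [IsSimpleModule A (ResidueField A →ₗ[A] M)] :
    Module.length A M ≤ Module.length A A := by
  simpa only [Module.length_eq_one, mul_one] using
    length_le_length_ring_mul_length_hom (A := A) (M := M)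

lemma isFiniteLength_of_isSimpleModule_hom [IsSimpleModule A (ResidueField A →ₗ[A] M)] :
    IsFiniteLength A M :=
  Module.length_ne_top_iff.mp (ne_top_of_le_ne_top Module.length_ne_top length_le_length_ring)

end ArtinianLocalRing

theorem omega_is_injective_hull_general {A Ω : Type*} [CommRing A] [IsArtinianRing A]
    [IsLocalRing A] [AddCommGroup Ω] [Module A Ω]
    (hsoc : IsSimpleModule A (ResidueField A →ₗ[A] Ω))
    (hlen : Module.length A A ≤ Module.length A Ω) :
    (∀ (E : Type*) [AddCommGroup E] [Module A E], Module.Baer A E →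
        IsSimpleModule A (ResidueField A →ₗ[A] E) → Nonempty (Ω ≃ₗ[A] E)) ∧
      Module.length A Ω = Module.length A A := by
  refine ⟨fun E _ _ hE hsocE ↦ ?_, length_le_length_ring.antisymm hlen⟩
  obtain ⟨_, _⟩ := isFiniteLength_iff_isNoetherian_isArtinian.mp
    (isFiniteLength_of_isSimpleModule_hom (A := A) (M := Ω))
  have := IsSimpleModule.nontrivial A (ResidueField A →ₗ[A] E)
  obtain ⟨h, hinj⟩ := exists_injective_linearMap_of_baer (M := Ω) hE
  exact ⟨.ofBijective h <| bijective_of_injective_of_length_le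
    isFiniteLength_of_isSimpleModule_hom hinj (length_le_length_ring.trans hlen)⟩

/-- If `A` is Artinian local with residue field `k`, and `Ω` is a finite module with
`Hom_A(k, Ω) ≅ k` and `length(Ω) ≥ length(A)`, then `Ω` is the injective hull of `k`
and `length(Ω) = length(A)`. -/
theorem omega_is_injective_hull (A : Type) [CommRing A] [IsArtinianRing A] [IsLocalRing A]
    (Ω : Type) [AddCommGroup Ω] [Module A Ω] [Module.Finite A Ω]
    (hsoc : Nonempty ((ResidueField A →ₗ[A] Ω) ≃ₗ[A] ResidueField A))
    (hlen : mlen A A ≤ mlen A Ω) :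
    (∀ (E : Type) [AddCommGroup E] [Module A E],
        IsInjHullResidue A E → Nonempty (Ω ≃ₗ[A] E)) ∧
      mlen A Ω = mlen A A := by
  simp only [mlen_eq_coe_length, WithBot.coe_le_coe, WithBot.coe_inj] at hlen ⊢
  obtain ⟨equiv_of_baer, length_eq⟩ :=
    omega_is_injective_hull_general (.congr hsoc.some) hlen
  exact ⟨fun E _ _ ⟨hE, f, hf, hess⟩ ↦ equiv_of_baer E (.of_injective hE)
    (isSimpleModule_residueField_hom_of_essential hf hess), length_eq⟩
end

section
/- Let (A, m) be an Artinian local ring with residue field k and Ω a finite A-module such that Hom_A(k, Ω) ≅ k and Ext^1_A(k, Ω) = 0. Then Ω is isomorphic to the injective hull E(k) of k; in particular Ext^i_A(k, Ω) = 0 for all i > 0. -/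
open CategoryTheory IsLocalRing

/-!
Over a local ring `A` with nilpotent maximal ideal, every nonzero module contains a copy of the
residue field `k`. If `f : D → Ω` is a maximal partial extension of a given map and `D ≠ M`, then
some `D'` between `D` and `M` has `D' / D ≅ k`, and `Ext¹(k, Ω) = 0` extends `f` to `D'`; so `Ω` is
injective. Since `Hom(k, Ω)` is one-dimensional, every copy of `k` in `Ω` is the same one, so
`k ⊆ Ω` is essential.
-/

universe w v u

section Ext

variable {C : Type u} [Category.{v} C] [Abelian C] [HasExt.{w} C]

lemma subsingleton_abelianExt_succ_iff {X : C} (P : ProjectiveResolution X) (Y : C) (n : ℕ) :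
    Subsingleton (Abelian.Ext X Y (n + 1)) ↔
      ∀ f : P.complex.X (n + 1) ⟶ Y, P.complex.d (n + 2) (n + 1) ≫ f = 0 →
        ∃ g : P.complex.X n ⟶ Y, P.complex.d (n + 1) n ≫ g = f := by
  rw [subsingleton_iff_forall_eq 0]
  refine ⟨fun h f hf ↦ (P.extMk_eq_zero_iff f (n + 2) rfl hf n rfl).1 (h _), fun h α ↦ ?_⟩
  obtain ⟨f, hf, rfl⟩ := P.extMk_surjective α (n + 2) rfl
  exact (P.extMk_eq_zero_iff f (n + 2) rfl hf n rfl).2 (h f hf)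

lemma subsingleton_derivedExt_succ_iff {R : Type*} [Ring R] [Linear R C] [EnoughProjectives C]
    (X Y : C) (n : ℕ) :
    Subsingleton (((Ext R C (n + 1)).obj (Opposite.op X)).obj Y) ↔
      Subsingleton (Abelian.Ext X Y (n + 1)) := by
  let P := ProjectiveResolution.of X
  rw [subsingleton_abelianExt_succ_iff P, ← ModuleCat.isZero_iff_subsingleton,
    (P.isoExt (n + 1) Y).isZero_iff, ← HomologicalComplex.exactAt_iff_isZero_homology,
    HomologicalComplex.exactAt_iff' _ n (n + 1) (n + 2) (by simp) (by simp),
    ShortComplex.moduleCat_exact_iff]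
  rfl

lemma exists_comp_eq_of_subsingleton_ext_one {S : ShortComplex C} (hS : S.ShortExact) {Y : C}
    [Subsingleton (Abelian.Ext S.X₃ Y 1)] (f : S.X₁ ⟶ Y) : ∃ g : S.X₂ ⟶ Y, S.f ≫ g = f := by
  obtain ⟨x, hx⟩ := Abelian.Ext.contravariant_sequence_exact₁ hS Y (Abelian.Ext.mk₀ f)
    (add_zero 1) (Subsingleton.elim _ _)
  obtain ⟨g, rfl⟩ := (Abelian.Ext.mk₀_bijective _ _).surjective x
  exact ⟨g, (Abelian.Ext.mk₀_bijective _ _).injective (by rwa [← Abelian.Ext.mk₀_comp_mk₀])⟩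

lemma subsingleton_ext_iff_of_iso {X X' : C} (e : X ≅ X') (Y : C) (n : ℕ) :
    Subsingleton (Abelian.Ext X Y n) ↔ Subsingleton (Abelian.Ext X' Y n) :=
  (((Abelian.extFunctor n).mapIso e.op).app Y).addCommGroupIsoToAddEquiv.symm.subsingleton_congr

end Ext

lemma exists_linearMap_comp_eq_of_subsingleton_ext_one {R : Type u} [Ring R] [Small.{v} R]
    {L M N Q : Type v} [AddCommGroup L] [AddCommGroup M] [AddCommGroup N] [AddCommGroup Q]
    [Module R L] [Module R M] [Module R N] [Module R Q]
    [Subsingleton (Abelian.Ext (ModuleCat.of R N) (ModuleCat.of R Q) 1)]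
    {i : L →ₗ[R] M} {p : M →ₗ[R] N} (hi : Function.Injective i) (hip : Function.Exact i p)
    (hp : Function.Surjective p) (f : L →ₗ[R] Q) : ∃ g : M →ₗ[R] Q, g ∘ₗ i = f := by
  have hS : (ModuleCat.shortComplexOfCompEqZero i p hip.linearMap_comp_eq_zero).ShortExact :=
    ModuleCat.shortComplex_shortExact _ hip hi hp
  obtain ⟨g, hg⟩ := exists_comp_eq_of_subsingleton_ext_one hS (ModuleCat.ofHom f)
  exact ⟨g.hom, congrArg ModuleCat.Hom.hom hg⟩

lemma exists_isSimpleModule_submodule (R : Type*) [Ring R] [IsSemiprimaryRing R] (M : Type v)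
    [AddCommGroup M] [Module R M] [Nontrivial M] : ∃ S : Submodule R M, IsSimpleModule R S := by
  refine IsSemiprimaryRing.induction ℤ R M
    (P := fun M _ _ _ ↦ Nontrivial M → ∃ S : Submodule R M, IsSimpleModule R S)
    (fun M _ _ _ _ _ _ _ ↦ IsSemisimpleModule.exists_simple_submodule R M)
    (fun M _ _ _ _ hN hQ _ ↦ ?_) inferInstance
  set N := Ring.jacobson R • (⊤ : Submodule R M)
  rcases subsingleton_or_nontrivial N with hbot | hnontriv
  · let e : (M ⧸ N) ≃ₗ[R] M :=
      Submodule.quotEquivOfEqBot N (Submodule.subsingleton_iff_eq_bot.1 hbot)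
    obtain ⟨S, hS⟩ := hQ e.toEquiv.nontrivial
    exact ⟨S.map e.toLinearMap, .congr (e.submoduleMap S).symm⟩
  · obtain ⟨S, hS⟩ := hN hnontriv
    exact ⟨S.map N.subtype, .congr (S.equivMapOfInjective _ N.injective_subtype).symm⟩

lemma injective_of_forall_exists_lt {R : Type u} [Ring R] {Q : Type v} [AddCommGroup Q]
    [Module R Q] (h : ∀ (M : Type v) [AddCommGroup M] [Module R M] (f : M →ₗ.[R] Q),
      f.domain ≠ ⊤ → ∃ g, f < g) :
    Module.Injective R Q where
  out _ M _ _ _ _ i hi f := by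
    have : Fact (Function.Injective i) := ⟨hi⟩
    let e := Module.Baer.extensionOfMax i f
    suffices he : e.domain = ⊤ from
      ⟨e.toFun ∘ₗ (LinearEquiv.ofTop _ he).symm.toLinearMap, fun x ↦ (e.is_extension x).symm⟩
    by_contra he
    obtain ⟨g, hg⟩ := h M e.toLinearPMap he
    let e' : Module.Baer.ExtensionOf i f :=
      { g with
        le := e.le.trans hg.le.1
        is_extension := fun x ↦ (e.is_extension x).trans (hg.le.2 rfl) }
    exact hg.ne (congrArg (·.toLinearPMap) (Module.Baer.extensionOfMax_is_max i f e' hg.le)).symm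

lemma exists_le_domain_eq_comap_mkQ {R : Type u} [Ring R] [Small.{v} R] {M Q : Type v}
    [AddCommGroup M] [AddCommGroup Q] [Module R M] [Module R Q] (f : M →ₗ.[R] Q)
    (S : Submodule R (M ⧸ f.domain))
    [Subsingleton (Abelian.Ext (ModuleCat.of R S) (ModuleCat.of R Q) 1)] :
    ∃ g, f ≤ g ∧ g.domain = S.comap f.domain.mkQ := by
  have hle : f.domain ≤ S.comap f.domain.mkQ := Submodule.le_comap_mkQ _ _
  let p : S.comap f.domain.mkQ →ₗ[R] S := f.domain.mkQ.restrict fun _ hx ↦ hx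
  have hexact : Function.Exact (Submodule.inclusion hle) p := by
    rw [LinearMap.exact_iff, Submodule.range_inclusion, LinearMap.ker_restrict]
    ext x
    simp
  have hp : Function.Surjective p := by
    rintro ⟨y, hy⟩
    obtain ⟨x, rfl⟩ := f.domain.mkQ_surjective y
    exact ⟨⟨x, hy⟩, rfl⟩
  obtain ⟨g, hg⟩ := exists_linearMap_comp_eq_of_subsingleton_ext_one
    (Submodule.inclusion_injective hle) hexact hp f.toFun
  refine ⟨⟨_, g⟩, ⟨hle, fun x y hxy ↦ ?_⟩, rfl⟩
  obtain rfl : Submodule.inclusion hle x = y := Subtype.ext hxy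
  exact (LinearMap.congr_fun hg x).symm

theorem injective_of_forall_isSimpleModule_subsingleton_ext_one (R : Type u) [Ring R]
    [IsSemiprimaryRing R] [Small.{v} R] (Q : Type v) [AddCommGroup Q] [Module R Q]
    (h : ∀ (S : Type v) [AddCommGroup S] [Module R S] [IsSimpleModule R S],
      Subsingleton (Abelian.Ext (ModuleCat.of R S) (ModuleCat.of R Q) 1)) :
    Module.Injective R Q := by
  refine injective_of_forall_exists_lt fun M _ _ f hf ↦ ?_
  have : Nontrivial (M ⧸ f.domain) := Submodule.Quotient.nontrivial_iff.2 hf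
  obtain ⟨S, hS⟩ := exists_isSimpleModule_submodule R (M ⧸ f.domain)
  have := h S
  obtain ⟨g, hfg, hg⟩ := exists_le_domain_eq_comap_mkQ f S
  refine ⟨g, hfg.lt_of_ne ?_⟩
  rintro rfl
  have hbot : S = ⊥ := by
    rw [← Submodule.map_comap_eq_of_surjective f.domain.mkQ_surjective S, ← hg,
      Submodule.mkQ_map_self]
  exact S.nontrivial_iff_ne_bot.1 (IsSimpleModule.nontrivial R S) hbot

/-- `f` is injective and its range meets every nonzero submodule, i.e. `f` exhibits `M` as an
essential extension of `K`. -/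
def IsEssentialMono {R K M : Type*} [Ring R] [AddCommGroup K] [AddCommGroup M] [Module R K]
    [Module R M] (f : K →ₗ[R] M) : Prop :=
  Function.Injective f ∧ ∀ N : Submodule R M, N ≠ ⊥ → N ⊓ LinearMap.range f ≠ ⊥

namespace IsEssentialMono

lemma injective_of_injective_comp {R K M N : Type*} [Ring R] [AddCommGroup K] [AddCommGroup M]
    [AddCommGroup N] [Module R K] [Module R M] [Module R N] {f : K →ₗ[R] M}
    (hf : IsEssentialMono f) {φ : M →ₗ[R] N} (hφ : Function.Injective (φ ∘ₗ f)) :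
    Function.Injective φ := by
  rw [← LinearMap.ker_eq_bot]
  by_contra hker
  refine hf.2 _ hker ((Submodule.eq_bot_iff _).2 ?_)
  rintro _ ⟨hx, t, rfl⟩
  rw [(map_eq_zero_iff (φ ∘ₗ f) hφ).1 hx, map_zero]

theorem nonempty_linearEquiv {R : Type u} {K E E' : Type v} [Ring R] [AddCommGroup K]
    [AddCommGroup E] [AddCommGroup E'] [Module R K] [Module R E] [Module R E']
    [hE : Module.Injective R E] [hE' : Module.Injective R E'] {f : K →ₗ[R] E} {f' : K →ₗ[R] E'}
    (hf : IsEssentialMono f) (hf' : IsEssentialMono f') : Nonempty (E ≃ₗ[R] E') := by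
  obtain ⟨φ, hφ⟩ := hE'.out f hf.1 f'
  have hφ_inj : Function.Injective φ :=
    hf.injective_of_injective_comp ((LinearMap.ext hφ : φ ∘ₗ f = f') ▸ hf'.1)
  obtain ⟨ψ, hψ⟩ := hE.out φ hφ_inj LinearMap.id
  have hψf' : ψ ∘ₗ f' = f := LinearMap.ext fun x ↦ by simp [← hφ, hψ]
  have hψ_inj : Function.Injective ψ := hf'.injective_of_injective_comp (hψf' ▸ hf.1)
  exact ⟨(LinearEquiv.ofBijective ψ ⟨hψ_inj, fun x ↦ ⟨φ x, hψ x⟩⟩).symm⟩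

end IsEssentialMono

section LocalRing

variable {A : Type u} [CommRing A] [IsLocalRing A]

instance : IsSimpleModule A (ResidueField A) :=
  isSimpleModule_iff_quot_maximal.2 ⟨maximalIdeal A, inferInstance, ⟨.refl A _⟩⟩

variable (A) in
lemma nonempty_linearEquiv_residueField_s5 (S : Type*) [AddCommGroup S] [Module A S]
    [hS : IsSimpleModule A S] : Nonempty (S ≃ₗ[A] ResidueField A) := by
  obtain ⟨I, hI, he⟩ := isSimpleModule_iff_quot_maximal.1 hS
  rwa [eq_maximalIdeal hI] at he

variable [IsSemiprimaryRing A]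

lemma injective_of_subsingleton_ext_one_residueField (Ω : Type u) [AddCommGroup Ω] [Module A Ω]
    [Subsingleton (Abelian.Ext (ModuleCat.of A (ResidueField A)) (ModuleCat.of A Ω) 1)] :
    Module.Injective A Ω := by
  refine injective_of_forall_isSimpleModule_subsingleton_ext_one A Ω fun S _ _ _ ↦ ?_
  obtain ⟨e⟩ := nonempty_linearEquiv_residueField_s5 A S
  exact (subsingleton_ext_iff_of_iso e.toModuleIso _ 1).2 inferInstance

lemma isEssentialMono_symm_one {Ω : Type*} [AddCommGroup Ω] [Module A Ω]
    (e : (ResidueField A →ₗ[A] Ω) ≃ₗ[A] ResidueField A) : IsEssentialMono (e.symm 1) := by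
  refine ⟨LinearMap.injective_of_ne_zero (by simp), fun N hN ↦ ?_⟩
  have : Nontrivial N := N.nontrivial_iff_ne_bot.2 hN
  obtain ⟨S, hS⟩ := exists_isSimpleModule_submodule A N
  obtain ⟨σ⟩ := nonempty_linearEquiv_residueField_s5 A S
  let h : ResidueField A →ₗ[A] Ω := N.subtype ∘ₗ S.subtype ∘ₗ σ.symm.toLinearMap
  have hinj : Function.Injective h :=
    N.injective_subtype.comp (S.injective_subtype.comp σ.symm.injective)
  obtain ⟨a, ha⟩ := residue_surjective (e h)
  have hsmul : h = a • e.symm 1 := by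
    rw [← map_smul, LinearEquiv.eq_symm_apply, ← ha, Algebra.smul_def, mul_one,
      ResidueField.algebraMap_eq]
  refine (Submodule.ne_bot_iff _).2 ⟨h 1, ⟨(S.subtype (σ.symm 1)).2, a • 1, ?_⟩, ?_⟩
  · rw [map_smul, hsmul, LinearMap.smul_apply]
  · exact (map_ne_zero_iff h hinj).2 one_ne_zero

end LocalRing

theorem omega_injective_hull_of_ext_one_general (A : Type) [CommRing A] [IsSemiprimaryRing A]
    [IsLocalRing A] (Ω : Type) [AddCommGroup Ω] [Module A Ω]
    (hsoc : Nonempty ((ResidueField A →ₗ[A] Ω) ≃ₗ[A] ResidueField A))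
    (hext1 : Subsingleton (extM A (ResidueField A) Ω 1)) :
    (∀ (E : Type) [AddCommGroup E] [Module A E],
        IsInjHullResidue A E → Nonempty (Ω ≃ₗ[A] E)) ∧
      ∀ i : ℕ, 0 < i → Subsingleton (extM A (ResidueField A) Ω i) := by
  obtain ⟨e⟩ := hsoc
  have := (subsingleton_derivedExt_succ_iff _ _ 0).1 hext1
  have hΩ : Module.Injective A Ω := injective_of_subsingleton_ext_one_residueField Ω
  refine ⟨fun E _ _ ⟨hE, f, hf⟩ ↦ (isEssentialMono_symm_one e).nonempty_linearEquiv hf, ?_⟩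
  rintro (_ | n) hi
  · exact absurd hi (lt_irrefl 0)
  · have := Module.injective_object_of_injective_module A Ω
    exact (subsingleton_derivedExt_succ_iff _ _ n).2
      (HasInjectiveDimensionLT.subsingleton _ 1 _ (by lia) _)

/-- If `A` is Artinian local with residue field `k` and `Ω` is a finite module with
`Hom_A(k, Ω) ≅ k` and `Ext^1_A(k, Ω) = 0`, then `Ω` is the injective hull of `k`;
in particular `Ext^i_A(k, Ω) = 0` for all `i > 0`. -/
theorem omega_injective_hull_of_ext_one (A : Type) [CommRing A] [IsArtinianRing A]
    [IsLocalRing A]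
    (Ω : Type) [AddCommGroup Ω] [Module A Ω] [Module.Finite A Ω]
    (hsoc : Nonempty ((ResidueField A →ₗ[A] Ω) ≃ₗ[A] ResidueField A))
    (hext1 : Subsingleton (extM A (ResidueField A) Ω 1)) :
    (∀ (E : Type) [AddCommGroup E] [Module A E],
        IsInjHullResidue A E → Nonempty (Ω ≃ₗ[A] E)) ∧
      ∀ i : ℕ, 0 < i → Subsingleton (extM A (ResidueField A) Ω i) := by
  exact omega_injective_hull_of_ext_one_general A Ω hsoc hext1
end

section
/- Let (R, m) be a 1-dimensional Noetherian S₁ local ring with dualizing module Ω, and write M* = Hom_R(M, Ω). If Q₁ ⊆ Q₂ are finite torsion-free R-modules with length_R(Q₂/Q₁) finite, then length_R(Q₁*/Q₂*) = length_R(Q₂/Q₁). -/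
open CategoryTheory IsLocalRing

/-- `Ω` is a dualizing module over the 1-dimensional local ring `R`:
`Ext^i_R(k, Ω) = δ_{i,1} · k`. -/
def IsDualizing1 (R : Type) [CommRing R] [IsLocalRing R]
    (Ω : Type) [AddCommGroup Ω] [Module R Ω] : Prop :=
  (∀ i : ℕ, i ≠ 1 → Subsingleton (extM R (ResidueField R) Ω i)) ∧
    Nonempty ((extM R (ResidueField R) Ω 1) ≃ₗ[R] ResidueField R)

/-!
The contravariant long exact sequence of `0 → Q₁ → Q₂ → Q₂ / Q₁ → 0` identifies `Q₁* / Q₂*` with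
`Ext¹(Q₂ / Q₁, Ω)` as soon as `Ext¹(Q₂, Ω) = 0`. For this vanishing, choose `x ∈ m` regular on `Q₂`:
then `Q₂ / x Q₂` has finite length, so `Ext²(Q₂ / x Q₂, Ω) = 0` by dévissage to the residue field
`k`, so `x` acts surjectively on the finite module `Ext¹(Q₂, Ω)` and Nakayama's lemma applies.
Since `Ext⁰(k, Ω)` and `Ext²(k, Ω)` vanish, `T ↦ length Ext¹(T, Ω)` is additive on modules of finite
length, hence it is `length T` times its value at `k`.
-/

universe w v u t

section ExtComparison

open Abelian CochainComplex.HomComplex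

variable {C : Type u} [Category.{v} C] [Abelian C] [HasExt.{w} C] {X Y : C}
  (P : ProjectiveResolution X)

theorem smul_extMk {R : Type t} [Ring R] [Linear R C] {n m : ℕ} (r : R) (f : P.complex.X n ⟶ Y)
    (hm : n + 1 = m) (hf : P.complex.d m n ≫ f = 0) :
    P.extMk (r • f) m hm (by simp [hf]) = r • P.extMk f m hm hf := by
  rw [Ext.smul_eq_comp_mk₀, P.extMk_comp_mk₀]
  simp

theorem extMk_degree_zero_eq_zero_iff {m : ℕ} (f : P.complex.X 0 ⟶ Y) (hm : 0 + 1 = m)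
    (hf : P.complex.d m 0 ≫ f = 0) : P.extMk f m hm hf = 0 ↔ f = 0 := by
  refine ⟨fun h ↦ ?_, by rintro rfl; simp⟩
  rw [← P.extEquivCohomologyClass.apply_eq_iff_eq, P.extEquivCohomologyClass_extMk,
    P.extEquivCohomologyClass_zero, CohomologyClass.mk_eq_zero_iff,
    Cocycle.toSingleMk_mem_coboundaries_iff _ _ _ _ _ 1 (by simp)] at h
  obtain ⟨g, hg⟩ := h
  have hX : Limits.IsZero (P.cochainComplex.X 1) := P.cochainComplex.isZero_of_isStrictlyLE 0 1
  rw [hX.eq_of_src g 0, Limits.comp_zero] at hg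
  simpa using hg.symm

theorem extMk_eq_zero_iff_of_prev {n m p : ℕ} (f : P.complex.X n ⟶ Y) (hm : n + 1 = m)
    (hf : P.complex.d m n ≫ f = 0) (hp : (ComplexShape.up ℕ).prev n = p) :
    P.extMk f m hm hf = 0 ↔ ∃ g : P.complex.X p ⟶ Y, P.complex.d n p ≫ g = f := by
  cases n with
  | zero =>
    rw [extMk_degree_zero_eq_zero_iff, P.complex.shape 0 p (by simp)]
    simp [eq_comm]
  | succ k => exact P.extMk_eq_zero_iff f m hm hf p (by simpa using hp.symm)

variable (R : Type t) [Ring R] [Linear R C]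

/-- `P.extMk` as a linear map from the degree `n` cocycles of `Hom(P, Y)`. The index `i` stands for
the degree before `n`; the cocycles do not depend on it, but the coboundaries do. -/
noncomputable def cocyclesToExt (Y : C) (i n : ℕ) :
    LinearMap.ker ((P.complex.linearYonedaObj R Y).sc' i n (n + 1)).g.hom →ₗ[R] Ext X Y n where
  toFun f := P.extMk f.1 (n + 1) rfl f.2
  map_add' f g := (P.add_extMk f.1 g.1 (n + 1) rfl f.2 g.2).symm
  map_smul' r f := smul_extMk P r f.1 rfl f.2

theorem cocyclesToExt_surjective (Y : C) (i n : ℕ) :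
    Function.Surjective (cocyclesToExt P R Y i n) := by
  intro α
  obtain ⟨f, hf, h⟩ := P.extMk_surjective α (n + 1) rfl
  exact ⟨⟨f, hf⟩, h⟩

theorem range_moduleCatToCycles_eq_ker_cocyclesToExt (Y : C) {i n : ℕ}
    (hi : (ComplexShape.up ℕ).prev n = i) :
    LinearMap.range ((P.complex.linearYonedaObj R Y).sc' i n (n + 1)).moduleCatToCycles =
      LinearMap.ker (cocyclesToExt P R Y i n) := by
  ext ⟨f, hf⟩
  refine Iff.trans ?_ (extMk_eq_zero_iff_of_prev P f rfl hf hi).symm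
  exact exists_congr fun _ ↦ Subtype.ext_iff

/-- The linear equivalence between `Ext` as a left derived functor and `Ext` as morphisms in the
derived category, through the cocycles of a projective resolution. -/
noncomputable def extLinearEquivAbelianExt [EnoughProjectives C] (X Y : C) (n : ℕ) :
    ((_root_.Ext R C n).obj (Opposite.op X)).obj Y ≃ₗ[R] Ext X Y n :=
  let P := projectiveResolution X
  let i := (ComplexShape.up ℕ).prev n
  let K := P.complex.linearYonedaObj R Y
  let S := K.sc' i n (n + 1)
  let toHomology : ((_root_.Ext R C n).obj (Opposite.op X)).obj Y ≃ₗ[R]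
      LinearMap.ker S.g.hom ⧸ LinearMap.range S.moduleCatToCycles :=
    (P.isoExt n Y ≪≫ K.homologyIsoSc' i n (n + 1) rfl (by simp) ≪≫
      S.moduleCatHomologyIso).toLinearEquiv
  toHomology ≪≫ₗ
    Submodule.quotEquivOfEq _ _ (range_moduleCatToCycles_eq_ker_cocyclesToExt P R Y rfl) ≪≫ₗ
    LinearMap.quotKerEquivOfSurjective _ (cocyclesToExt_surjective P R Y i n)

end ExtComparison

section ExtExactSequence

open Abelian

variable {C : Type u} [Category.{v} C] [Abelian C] [HasExt.{w} C] {S : ShortComplex C}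
  (hS : S.ShortExact) {Y : C} {n : ℕ}

theorem subsingleton_ext_of_isZero {X : C} (hX : Limits.IsZero X) :
    Subsingleton (Ext X Y n) := by
  refine subsingleton_of_forall_eq 0 fun x ↦ ?_
  rw [← Ext.mk₀_id_comp x, hX.eq_of_src (𝟙 X) 0, Ext.mk₀_zero, Ext.zero_comp]

include hS

theorem subsingleton_ext_of_shortExact (h₁ : Subsingleton (Ext S.X₁ Y n))
    (h₃ : Subsingleton (Ext S.X₃ Y n)) : Subsingleton (Ext S.X₂ Y n) := by
  refine subsingleton_of_forall_eq 0 fun x ↦ ?_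
  obtain ⟨y, rfl⟩ := Ext.contravariant_sequence_exact₂ hS Y x (Subsingleton.elim _ _)
  rw [Subsingleton.elim y 0, Ext.comp_zero]

theorem length_ext_eq_add_of_shortExact (R : Type t) [CommRing R] [Linear R C]
    (h₁ : Subsingleton (Ext S.X₁ Y n)) (h₃ : Subsingleton (Ext S.X₃ Y (n + 2))) :
    Module.length R (Ext S.X₂ Y (n + 1)) =
      Module.length R (Ext S.X₃ Y (n + 1)) + Module.length R (Ext S.X₁ Y (n + 1)) := by
  refine Module.length_eq_add_of_exact
    ((Ext.mk₀ S.g).precompOfLinear R Y (zero_add (n + 1)))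
    ((Ext.mk₀ S.f).precompOfLinear R Y (zero_add (n + 1))) ?_ ?_ ?_
  · rw [injective_iff_map_eq_zero]
    intro x hx
    obtain ⟨y, rfl⟩ := Ext.contravariant_sequence_exact₃ hS Y x hx (add_comm 1 n)
    rw [Subsingleton.elim y 0, Ext.comp_zero]
  · intro x
    exact Ext.contravariant_sequence_exact₁ hS Y x (add_comm 1 (n + 1)) (Subsingleton.elim _ _)
  · intro x
    refine ⟨Ext.contravariant_sequence_exact₂ hS Y x, ?_⟩
    rintro ⟨y, rfl⟩
    simp

theorem extClass_comp_surjective (h₂ : Subsingleton (Ext S.X₂ Y (n + 1))) :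
    Function.Surjective fun x : Ext S.X₁ Y n ↦ hS.extClass.comp x (add_comm 1 n) :=
  fun y ↦ Ext.contravariant_sequence_exact₃ hS Y y (h₂.elim _ _) (add_comm 1 n)

theorem extClass_comp_mk₀_eq_zero_iff (a : S.X₁ ⟶ Y) :
    hS.extClass.comp (Ext.mk₀ a) (add_zero 1) = 0 ↔ ∃ b : S.X₂ ⟶ Y, S.f ≫ b = a := by
  constructor
  · intro ha
    obtain ⟨x, hx⟩ := Ext.contravariant_sequence_exact₁ hS Y _ (add_zero 1) ha
    obtain ⟨b, rfl⟩ := Ext.homEquiv₀.symm.surjective x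
    exact ⟨b, Ext.homEquiv₀.symm.injective ((Ext.mk₀_comp_mk₀ S.f b).symm.trans hx)⟩
  · rintro ⟨b, rfl⟩
    rw [← Ext.mk₀_comp_mk₀]
    exact hS.extClass_comp_assoc _

end ExtExactSequence

section Restriction

open Abelian

variable {R : Type u} [CommRing R] {M L : Type v} [AddCommGroup M] [Module R M]
  [AddCommGroup L] [Module R L]

theorem shortExact_subtype_of_ker_eq {N : Submodule R M} {g : M →ₗ[R] L}
    (hN : LinearMap.ker g = N) (hg : Function.Surjective g) :
    (ModuleCat.shortComplexOfCompEqZero N.subtype g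
      (by rw [← hN, LinearMap.comp_ker_subtype])).ShortExact := by
  subst hN
  exact LinearMap.shortExact_shortComplexKer hg

variable [Small.{v} R] (N : Submodule R M) (Y : Type v) [AddCommGroup Y] [Module R Y]

/-- The connecting map `Hom(N, Y) → Ext¹(M / N, Y)` of the short exact sequence
`0 → N → M → M / N → 0`. -/
noncomputable def homToExtQuotient :
    (N →ₗ[R] Y) →ₗ[R] Ext (ModuleCat.of R (M ⧸ N)) (ModuleCat.of R Y) 1 :=
  (shortExact_subtype_of_ker_eq N.ker_mkQ N.mkQ_surjective).extClass.precompOfLinear R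
      (ModuleCat.of R Y) (add_zero 1) ∘ₗ
    (Ext.linearEquiv₀ (R := R) (X := ModuleCat.of R N) (Y := ModuleCat.of R Y)).symm.toLinearMap ∘ₗ
    (ModuleCat.homLinearEquiv (S := R) (M := ModuleCat.of R N)
      (N := ModuleCat.of R Y)).symm.toLinearMap

theorem ker_homToExtQuotient :
    LinearMap.ker (homToExtQuotient N Y) = LinearMap.range (LinearMap.lcomp R Y N.subtype) := by
  ext f
  refine (extClass_comp_mk₀_eq_zero_iff
    (shortExact_subtype_of_ker_eq N.ker_mkQ N.mkQ_surjective) (ModuleCat.ofHom f)).trans ⟨?_, ?_⟩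
  · rintro ⟨b, hb⟩
    exact ⟨b.hom, congrArg ModuleCat.Hom.hom hb⟩
  · rintro ⟨g, rfl⟩
    exact ⟨ModuleCat.ofHom g, rfl⟩

variable (h : Subsingleton (Ext (ModuleCat.of R M) (ModuleCat.of R Y) 1))

include h in
theorem homToExtQuotient_surjective : Function.Surjective (homToExtQuotient N Y) := by
  intro y
  obtain ⟨z, hz⟩ := extClass_comp_surjective
    (shortExact_subtype_of_ker_eq N.ker_mkQ N.mkQ_surjective) h y
  obtain ⟨f, rfl⟩ := Ext.homEquiv₀.symm.surjective z
  exact ⟨f.hom, hz⟩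

/-- The cokernel of the restriction map `Hom(M, Y) → Hom(N, Y)` is `Ext¹(M / N, Y)` when
`Ext¹(M, Y)` vanishes. -/
noncomputable def quotientRangeLcompEquivExt :
    ((N →ₗ[R] Y) ⧸ LinearMap.range (LinearMap.lcomp R Y N.subtype)) ≃ₗ[R]
      Ext (ModuleCat.of R (M ⧸ N)) (ModuleCat.of R Y) 1 :=
  Submodule.quotEquivOfEq _ _ (ker_homToExtQuotient N Y).symm ≪≫ₗ
    (homToExtQuotient N Y).quotKerEquivOfSurjective (homToExtQuotient_surjective N Y h)

end Restriction

section Devissage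

open Abelian

theorem exists_surjective_residueField_ker_eq {R : Type u} {M : Type v} [CommRing R]
    [IsLocalRing R] [AddCommGroup M] [Module R M] {N : Submodule R M}
    (hN : IsSimpleModule R (M ⧸ N)) :
    ∃ g : M →ₗ[R] ResidueField R, Function.Surjective g ∧ LinearMap.ker g = N := by
  obtain ⟨I, hI, ⟨e⟩⟩ := isSimpleModule_iff_quot_maximal.1 hN
  obtain rfl := eq_maximalIdeal hI
  exact ⟨e.toLinearMap ∘ₗ N.mkQ, e.surjective.comp N.mkQ_surjective,
    (e.ker_comp N.mkQ).trans N.ker_mkQ⟩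

theorem length_eq_add_one_of_isSimpleModule_quotient {R : Type u} {M : Type v} [Ring R]
    [AddCommGroup M] [Module R M] {N : Submodule R M} (hN : IsSimpleModule R (M ⧸ N)) :
    Module.length R M = Module.length R N + 1 := by
  rw [Module.length_eq_add_of_exact N.subtype N.mkQ N.subtype_injective N.mkQ_surjective
    (LinearMap.exact_subtype_mkQ N), Module.length_eq_one R (M ⧸ N)]

variable {R : Type u} [CommRing R] [IsLocalRing R] {Y : ModuleCat.{u} R} {T : Type u}
  [AddCommGroup T] [Module R T] {n : ℕ}

theorem subsingleton_ext_of_isFiniteLength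
    (h : Subsingleton (Ext (ModuleCat.of R (ResidueField R)) Y n)) (hT : IsFiniteLength R T) :
    Subsingleton (Ext (ModuleCat.of R T) Y n) := by
  induction hT with
  | of_subsingleton => exact subsingleton_ext_of_isZero (ModuleCat.isZero_of_subsingleton _)
  | @of_simple_quotient _ _ _ _ hN _ ih =>
    obtain ⟨g, hg, hker⟩ := exists_surjective_residueField_ker_eq hN
    exact subsingleton_ext_of_shortExact (shortExact_subtype_of_ker_eq hker hg) ih h

theorem length_ext_of_isFiniteLength
    (h₀ : Subsingleton (Ext (ModuleCat.of R (ResidueField R)) Y n))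
    (h₂ : Subsingleton (Ext (ModuleCat.of R (ResidueField R)) Y (n + 2)))
    (hT : IsFiniteLength R T) :
    Module.length R (Ext (ModuleCat.of R T) Y (n + 1)) =
      Module.length R T *
        Module.length R (Ext (ModuleCat.of R (ResidueField R)) Y (n + 1)) := by
  induction hT with
  | @of_subsingleton M =>
    have : Subsingleton (Ext (ModuleCat.of R M) Y (n + 1)) :=
      subsingleton_ext_of_isZero (ModuleCat.isZero_of_subsingleton _)
    rw [Module.length_eq_zero, Module.length_eq_zero, zero_mul]
  | @of_simple_quotient M _ _ N hN hfin ih =>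
    obtain ⟨g, hg, hker⟩ := exists_surjective_residueField_ker_eq hN
    refine (length_ext_eq_add_of_shortExact (shortExact_subtype_of_ker_eq hker hg) R
      (subsingleton_ext_of_isFiniteLength h₀ hfin) h₂).trans ?_
    rw [length_eq_add_one_of_isSimpleModule_quotient hN, add_mul, one_mul, add_comm]
    exact congrArg (· + _) ih

end Devissage

section RegularElement

open Abelian

variable {R : Type u} [CommRing R] [IsNoetherianRing R]

section

variable {M : Type v} [AddCommGroup M] [Module R M] [Module.Finite R M]

theorem exists_mem_isSMulRegular {I : Ideal R}
    (hI : ∀ P ∈ associatedPrimes R M, ¬ I ≤ P) : ∃ x ∈ I, IsSMulRegular M x := by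
  by_contra! h
  have I_subset : (I : Set R) ⊆ ⋃ P ∈ associatedPrimes R M, P := by
    rw [biUnion_associatedPrimes_eq_compl_regular]
    exact h
  obtain ⟨P, hP, hIP⟩ := (Ideal.subset_union_prime_finite (associatedPrimes.finite R M) ⊥ ⊥
    fun P hP _ _ ↦ hP.isPrime).1 I_subset
  exact hI P hP hIP

theorem isFiniteLength_of_supportDim_le_zero (h : Module.supportDim R M ≤ 0) :
    IsFiniteLength R M := by
  let A := R ⧸ Module.annihilator R M
  have : Ring.KrullDimLE 0 A := by
    rwa [Ring.krullDimLE_iff, ← Module.supportDim_eq_ringKrullDim_quotient_annihilator]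
  have : IsArtinianRing A := isArtinianRing_iff_krullDimLE_zero.2 this
  let := (Module.isTorsionBySet_annihilator R M).module
  have : IsScalarTower R A M := (Module.isTorsionBySet_annihilator R M).isScalarTower
  have : Module.Finite A M := Module.Finite.of_restrictScalars_finite R A M
  exact isFiniteLength_iff_isNoetherian_isArtinian.2
    ⟨inferInstance, isArtinian_of_surjective_algebraMap (R := A) Ideal.Quotient.mk_surjective⟩

theorem isFiniteLength_quotSMulTop [IsLocalRing R] {x : R} (hx : x ∈ maximalIdeal R)
    (reg : IsSMulRegular M x) (h : Module.supportDim R M ≤ 1) :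
    IsFiniteLength R (QuotSMulTop x M) := by
  refine isFiniteLength_of_supportDim_le_zero ?_
  rwa [← ENat.WithBot.add_le_add_one_right_iff,
    Module.supportDim_quotSMulTop_succ_eq_supportDim reg hx]

end

theorem subsingleton_ext_of_isSMulRegular [Small.{v} R] {M Y : ModuleCat.{v} R}
    [Module.Finite R M] [Module.Finite R Y] {x : R} (hx : x ∈ (⊥ : Ideal R).jacobson)
    (reg : IsSMulRegular M x) {n : ℕ}
    (h : Subsingleton (Ext (ModuleCat.of R (QuotSMulTop x M)) Y (n + 1))) :
    Subsingleton (Ext M Y n) := by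
  have smul_eq_comp (z : Ext M Y n) : (Ext.mk₀ (x • 𝟙 M)).comp z (zero_add n) = x • z := by
    rw [Ext.mk₀_smul, Ext.smul_comp, Ext.mk₀_id_comp]
  have smul_surjective (y : Ext M Y n) : ∃ z : Ext M Y n, x • z = y := by
    obtain ⟨z, hz⟩ := Ext.contravariant_sequence_exact₁ reg.smulShortComplex_shortExact Y y
      (add_comm 1 n) (h.elim _ _)
    exact ⟨z, (smul_eq_comp z).symm.trans hz⟩
  have : Module.Finite R (Ext M Y n) := ModuleCat.finite_ext R _ _ n
  have top_eq_bot : (⊤ : Submodule R (Ext M Y n)) = ⊥ := by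
    refine Submodule.eq_bot_of_le_smul_of_le_jacobson_bot (Ideal.span {x}) _
      Module.Finite.fg_top ?_ ((Ideal.span_singleton_le_iff_mem _).2 hx)
    intro y _
    obtain ⟨z, rfl⟩ := smul_surjective y
    exact Submodule.smul_mem_smul (Ideal.mem_span_singleton_self x) Submodule.mem_top
  exact (Submodule.subsingleton_iff R).1 (subsingleton_of_bot_eq_top top_eq_bot.symm)

end RegularElement

section Duality

variable {R : Type u} [CommRing R] [IsLocalRing R]

theorem maximalIdeal_notMem_minimalPrimes (h : ringKrullDim R ≠ 0) :
    maximalIdeal R ∉ minimalPrimes R := by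
  intro hmin
  rw [← maximalIdeal_height_eq_ringKrullDim, Ideal.height_eq_zero_iff.2 hmin] at h
  exact h rfl

open Abelian

variable [IsNoetherianRing R] {Y M : Type u} [AddCommGroup Y] [Module R Y] [Module.Finite R Y]
  [AddCommGroup M] [Module R M] [Module.Finite R M]

theorem subsingleton_ext_of_maximalIdeal_notMem_associatedPrimes {n : ℕ}
    (hY : Subsingleton (Ext (ModuleCat.of R (ResidueField R)) (ModuleCat.of R Y) (n + 1)))
    (hdim : Module.supportDim R M ≤ 1) (hM : maximalIdeal R ∉ associatedPrimes R M) :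
    Subsingleton (Ext (ModuleCat.of R M) (ModuleCat.of R Y) n) := by
  obtain ⟨x, hx, reg⟩ : ∃ x ∈ maximalIdeal R, IsSMulRegular M x := by
    refine exists_mem_isSMulRegular fun P hP hle ↦ hM ?_
    rwa [(maximalIdeal.isMaximal R).eq_of_le hP.isPrime.ne_top hle]
  exact subsingleton_ext_of_isSMulRegular (M := ModuleCat.of R M) (Y := ModuleCat.of R Y)
    (maximalIdeal_le_jacobson _ hx) reg
    (subsingleton_ext_of_isFiniteLength hY (isFiniteLength_quotSMulTop hx reg hdim))

theorem length_dual_quotient_general {Ω Q₂ : Type u} [AddCommGroup Ω] [Module R Ω]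
    [Module.Finite R Ω] [AddCommGroup Q₂] [Module R Q₂] [Module.Finite R Q₂]
    (h₀ : Subsingleton (Ext (ModuleCat.of R (ResidueField R)) (ModuleCat.of R Ω) 0))
    (h₂ : Subsingleton (Ext (ModuleCat.of R (ResidueField R)) (ModuleCat.of R Ω) 2))
    (hdim : Module.supportDim R Q₂ ≤ 1) (hQ₂ : maximalIdeal R ∉ associatedPrimes R Q₂)
    {Q₁ : Submodule R Q₂} (hfin : IsFiniteLength R (Q₂ ⧸ Q₁)) :
    Module.length R ((Q₁ →ₗ[R] Ω) ⧸ LinearMap.range (LinearMap.lcomp R Ω Q₁.subtype)) =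
      Module.length R (Q₂ ⧸ Q₁) *
        Module.length R (Ext (ModuleCat.of R (ResidueField R)) (ModuleCat.of R Ω) 1) := by
  have ext_one : Subsingleton (Ext (ModuleCat.of R Q₂) (ModuleCat.of R Ω) 1) :=
    subsingleton_ext_of_maximalIdeal_notMem_associatedPrimes h₂ hdim hQ₂
  rw [(quotientRangeLcompEquivExt Q₁ Ω ext_one).length_eq]
  exact length_ext_of_isFiniteLength h₀ h₂ hfin

end Duality

namespace IsDualizing1

open Abelian

variable {R : Type} [CommRing R] [IsLocalRing R] {Ω : Type} [AddCommGroup Ω] [Module R Ω]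

theorem subsingleton_ext (hΩ : IsDualizing1 R Ω) {n : ℕ} (hn : n ≠ 1) :
    Subsingleton (Ext (ModuleCat.of R (ResidueField R)) (ModuleCat.of R Ω) n) :=
  (extLinearEquivAbelianExt R _ _ n).symm.toEquiv.subsingleton_congr.2 (hΩ.1 n hn)

theorem length_ext_one (hΩ : IsDualizing1 R Ω) :
    Module.length R (Ext (ModuleCat.of R (ResidueField R)) (ModuleCat.of R Ω) 1) = 1 := by
  obtain ⟨e⟩ := hΩ.2
  rw [← (extLinearEquivAbelianExt R _ _ 1).length_eq]
  refine e.length_eq.trans ?_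
  rw [Module.length_eq_one_iff, isSimpleModule_iff_quot_maximal]
  exact ⟨maximalIdeal R, inferInstance, ⟨LinearEquiv.refl R _⟩⟩

end IsDualizing1

/-- Over a 1-dimensional Noetherian `S₁` local ring with dualizing module `Ω`, if
`Q₁ ⊆ Q₂` are finite torsion-free modules with `Q₂/Q₁` of finite length, then
`length(Q₁*/Q₂*) = length(Q₂/Q₁)`, where `(-)* = Hom_R(-, Ω)` and `Q₂*` sits inside
`Q₁*` via restriction. -/
theorem length_dual_quotient (R : Type) [CommRing R] [IsNoetherianRing R] [IsLocalRing R]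
    (hdim : ringKrullDim R = 1)
    (hS1 : ∀ P ∈ associatedPrimes R R, P ∈ minimalPrimes R)
    (Ω : Type) [AddCommGroup Ω] [Module R Ω] [Module.Finite R Ω] (hΩ : IsDualizing1 R Ω)
    (Q₂ : Type) [AddCommGroup Q₂] [Module R Q₂] [Module.Finite R Q₂]
    (htf : ∀ P ∈ associatedPrimes R Q₂, P ∈ minimalPrimes R)
    (Q₁ : Submodule R Q₂)
    (hfin : IsFiniteLength R (Q₂ ⧸ Q₁)) :
    mlen R ((Q₁ →ₗ[R] Ω) ⧸
        LinearMap.range (LinearMap.lcomp R Ω (Q₁.subtype) : (Q₂ →ₗ[R] Ω) →ₗ[R] (Q₁ →ₗ[R] Ω))) =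
      mlen R (Q₂ ⧸ Q₁) := by
  have hQ₂ : maximalIdeal R ∉ associatedPrimes R Q₂ := fun h ↦
    maximalIdeal_notMem_minimalPrimes (by simp [hdim]) (htf _ h)
  have supportDim_le : Module.supportDim R Q₂ ≤ 1 :=
    hdim ▸ Module.supportDim_le_ringKrullDim R Q₂
  rw [mlen, mlen, ← Module.coe_length, ← Module.coe_length,
    length_dual_quotient_general (hΩ.subsingleton_ext (by simp)) (hΩ.subsingleton_ext (by simp))
      supportDim_le hQ₂ hfin, hΩ.length_ext_one, mul_one]
end
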